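/- For every real number β with 0 < β < 1 there exists a constant C > 0, depending only on n, p, α, β, C₁ and C₂, with the following property: if u is a nonnegative C¹ solution of div A(x,Du) + b(x)|Du|^α ≥ q(x)g(u) in ℝⁿ and 0 < r₁ < r₂ are real numbers such that M(r₂;u) > M(r₁;u) ≥ β·M(r₂;u) and (M(r₂;u) − M(r₁;u))^{α−p+1}·(r₂ − r₁)^{p−α}·ess sup_{r₁<|x|<r₂} b(x) ≤ C₁/4, then (M(r₂;u) − M(r₁;u))^{p−1} ≥ C·(r₂ − r₁)^p·(ess inf_{r₁<|x|<r₂} q(x))·inf_{t∈(β·M(r₁;u), M(r₂;u))} g(t). -/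

import Mathlib

open MeasureTheory Metric Set Filter
open scoped RealInnerProductSpace ENNReal

noncomputable section

abbrev Euc (n : ℕ) := EuclideanSpace ℝ (Fin n)

/-- Weak solution of `div A(x,Dv) + b(x)|Dv|^α ≥ a(x)` on an open set `U`:
for every nonnegative test function `φ ∈ C₀^∞(U)`,
`-∫ A(x,Dv)·Dφ + ∫ b |Dv|^α φ ≥ ∫ a φ`. -/
def IsWeakSol {n : ℕ} (A : Euc n → Euc n → Euc n) (b : Euc n → ℝ) (α : ℝ)
    (a : Euc n → ℝ) (U : Set (Euc n)) (v : Euc n → ℝ) : Prop :=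
  ∀ φ : Euc n → ℝ, ContDiff ℝ (⊤ : ℕ∞) φ → HasCompactSupport φ → tsupport φ ⊆ U →
    (∀ x, 0 ≤ φ x) →
    (∫ x in U, a x * φ x) ≤
      (-(∫ x in U, ⟪A x (gradient v x), gradient φ x⟫)) +
        ∫ x in U, b x * ‖gradient v x‖ ^ α * φ x

/-- Structural conditions on `A`: measurability, coercivity and growth. -/
def StructCond {n : ℕ} (A : Euc n → Euc n → Euc n) (p C₁ C₂ : ℝ) : Prop :=
  Measurable (Function.uncurry A) ∧
    ∀ x ζ : Euc n, C₁ * ‖ζ‖ ^ p ≤ ⟪ζ, A x ζ⟫ ∧ ‖A x ζ‖ ≤ C₂ * ‖ζ‖ ^ (p - 1)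

/-- Locally bounded function on `ℝⁿ`. -/
def LocBdd {n : ℕ} (b : Euc n → ℝ) : Prop :=
  ∀ K : Set (Euc n), IsCompact K → ∃ C, ∀ x ∈ K, b x ≤ C

/-- `M(r; u) = max_{|x| = r} u x`. -/
def sphMax {n : ℕ} (u : Euc n → ℝ) (r : ℝ) : ℝ := sSup (u '' Metric.sphere (0 : Euc n) r)

/-- `g_θ(t) = inf_{s ∈ (t/θ, θ t)} g s`. -/
def ginf (g : ℝ → ℝ) (θ t : ℝ) : ℝ := sInf (g '' Set.Ioo (t / θ) (θ * t))

/-- The open annulus `{x : r₁ < |x| < r₂}`. -/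
def Ann (n : ℕ) (r₁ r₂ : ℝ) : Set (Euc n) := {x : Euc n | r₁ < ‖x‖ ∧ ‖x‖ < r₂}

/-- `q_σ(r) = ess inf_{r/σ < |x| < σ r} q x`. -/
def qinf {n : ℕ} (q : Euc n → ℝ) (σ r : ℝ) : ℝ :=
  essInf q (volume.restrict (Ann n (r / σ) (σ * r)))

/-- `f_σ(r) = q_σ(r) / (1 + r q_σ(r)^{(α-p+1)/α} ess sup_{r/σ<|x|<σr} b^{(p-1)/α})`. -/
def fdef {n : ℕ} (q b : Euc n → ℝ) (p α σ r : ℝ) : ℝ :=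
  qinf q σ r /
    (1 + r * qinf q σ r ^ ((α - p + 1) / α) *
      essSup (fun x => b x ^ ((p - 1) / α)) (volume.restrict (Ann n (r / σ) (σ * r))))

/-!
Let `z` be a maximum point of `u` on the sphere `|x| = (r₁ + r₂)/2`. By the maximum principle
`M(r₁;u) ≤ u(z)`, and `u ≤ M(r₂;u)` in the ball of radius `(r₂ - r₁)/2` around `z`. Subtract from
`u` a paraboloid centred at `z`, so steep that the difference `v` lies below the level
`M(r₁;u) - β (M(r₂;u) - M(r₁;u)) ≥ β M(r₁;u)` on the boundary of the ball. Testing the inequality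
with `((v - k)₊)²` gives energy estimates for levels `k` above that one, the smallness of `b`
allowing the drift to be absorbed in the coercivity of `A`. As `v(z) ≥ M(r₁;u)`, De Giorgi's
iteration (with the `L¹` Sobolev inequality) shows that a fixed fraction of the ball lies in a
higher superlevel set of `v`; on that set the source term `q g(u)` is bounded from below, and the
energy estimate bounds its integral from above.
-/

section RealInequalities

lemma rpow_sub_mul_rpow_le_add {s t α p : ℝ} (hs : 0 ≤ s) (ht : 0 ≤ t) (hα : 0 ≤ α)
    (hαp : α ≤ p) : s ^ (p - α) * t ^ α ≤ s ^ p + t ^ p := by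
  have hpα : 0 ≤ p - α := sub_nonneg.2 hαp
  calc s ^ (p - α) * t ^ α ≤ max s t ^ (p - α) * max s t ^ α := by
        gcongr
        exacts [le_max_left s t, le_max_right s t]
    _ = max s t ^ p := by
        rw [← Real.rpow_add_of_nonneg (hs.trans (le_max_left s t)) hpα hα, sub_add_cancel]
    _ ≤ s ^ p + t ^ p := by
        rcases max_choice s t with h | h <;> rw [h]
        exacts [le_add_of_nonneg_right (by positivity), le_add_of_nonneg_left (by positivity)]

lemma le_geometric_of_deGiorgi_step {m : ℕ} (hm : m ≠ 0) {d Λ x y : ℝ} (hd : 0 < d) (hΛ : 0 < Λ)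
    (hx : 0 ≤ x) (j : ℕ)
    (hxy : ((d * (1 / 2) ^ (j + 1)) ^ 2) ^ (m + 1) * y ^ m ≤ (Λ * x) ^ (m + 1))
    (hxj : x ≤ (d ^ 2 * (1 / 4) ^ (m + 1) / Λ) ^ (m + 1) * ((1 / 4) ^ (m + 1)) ^ j) :
    y ≤ (d ^ 2 * (1 / 4) ^ (m + 1) / Λ) ^ (m + 1) * ((1 / 4) ^ (m + 1)) ^ (j + 1) := by
  set θ : ℝ := (1 / 4) ^ (m + 1) with hθ
  set Y : ℝ := (d ^ 2 * θ / Λ) ^ (m + 1) with hY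
  have hstep : ((d * (1 / 2 : ℝ) ^ (j + 1)) ^ 2) ^ (m + 1) = (d ^ 2) ^ (m + 1) * θ ^ (j + 1) := by
    rw [hθ, show (1 / 4 : ℝ) = (1 / 2) ^ 2 by norm_num]
    generalize (1 / 2 : ℝ) = c
    ring
  have hΛY : Λ ^ (m + 1) * Y = (d ^ 2) ^ (m + 1) * θ ^ (m + 1) := by
    rw [hY, ← mul_pow, ← mul_pow, mul_div_cancel₀ _ hΛ.ne']
  have hθ_pos : 0 < θ := by positivity
  have hY_pos : 0 < Y := by positivity
  clear_value Y θ
  have hpow : ((d ^ 2) ^ (m + 1) * θ ^ (j + 1)) * y ^ m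
      ≤ ((d ^ 2) ^ (m + 1) * θ ^ (j + 1)) * (Y * θ ^ (j + 1)) ^ m := calc
    _ ≤ (Λ * x) ^ (m + 1) := hstep ▸ hxy
    _ ≤ (Λ * (Y * θ ^ j)) ^ (m + 1) := by gcongr
    _ = (Λ ^ (m + 1) * Y) * Y ^ m * (θ ^ j) ^ (m + 1) := by ring
    _ = _ := by rw [hΛY]; ring
  exact le_of_pow_le_pow_left₀ hm (by positivity) (le_of_mul_le_mul_left hpow (by positivity))

lemma eq_zero_of_deGiorgi_decay {n : ℕ} (hn : 2 ≤ n) {F : ℝ → ℝ} (hF₀ : ∀ k, 0 ≤ F k)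
    (hF : Antitone F) {k₀ d Λ : ℝ} (hd : 0 < d) (hΛ : 0 < Λ)
    (hdecay : ∀ k l, k₀ ≤ k → k < l → ((l - k) ^ 2) ^ n * F l ^ (n - 1) ≤ (Λ * F k) ^ n)
    (hsmall : F k₀ ≤ (d ^ 2 * (1 / 4) ^ n / Λ) ^ n) : F (k₀ + d) = 0 := by
  obtain ⟨m, rfl⟩ : ∃ m, n = m + 1 := ⟨n - 1, by omega⟩
  set level : ℕ → ℝ := fun j => k₀ + d * (1 - (1 / 2) ^ j)
  have hlevel_le (j : ℕ) : level j ≤ k₀ + d := by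
    have : (0 : ℝ) < (1 / 2) ^ j := by positivity
    simp only [level]
    nlinarith
  have hgeom (j : ℕ) : F (level j)
      ≤ (d ^ 2 * (1 / 4) ^ (m + 1) / Λ) ^ (m + 1) * ((1 / 4) ^ (m + 1)) ^ j := by
    induction j with
    | zero => simpa [level] using hsmall
    | succ j ih =>
      refine le_geometric_of_deGiorgi_step (by omega) hd hΛ (hF₀ _) j ?_ ih
      have hgap : level (j + 1) - level j = d * (1 / 2) ^ (j + 1) := by
        simp only [level]
        ring
      have hgap_pos : 0 < d * (1 / 2 : ℝ) ^ (j + 1) := by positivity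
      have hle : k₀ ≤ level j :=
        le_add_of_nonneg_right
          (mul_nonneg hd.le (sub_nonneg.2 (pow_le_one₀ (by norm_num) (by norm_num))))
      simpa only [hgap, Nat.add_sub_cancel] using
        hdecay (level j) (level (j + 1)) hle (by linarith)
  have hratio : ((1 / 4 : ℝ)) ^ (m + 1) < 1 :=
    pow_lt_one₀ (by norm_num) (by norm_num) (by omega)
  have hlim := (tendsto_pow_atTop_nhds_zero_of_lt_one (by positivity) hratio).const_mul
    ((d ^ 2 * (1 / 4) ^ (m + 1) / Λ) ^ (m + 1))
  rw [mul_zero] at hlim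
  exact le_antisymm (ge_of_tendsto' hlim fun j => (hF (hlevel_le j)).trans (hgeom j)) (hF₀ _)

end RealInequalities

section TruncatedSquare

lemma hasDerivAt_sq_max_zero (t : ℝ) :
    HasDerivAt (fun s : ℝ => max s 0 ^ 2) (2 * max t 0) t := by
  have hquad (h : ℝ) : |max (t + h) 0 ^ 2 - max t 0 ^ 2 - h * (2 * max t 0)| ≤ h ^ 2 := by
    rw [abs_le]
    rcases le_total (t + h) 0 with h₁ | h₁ <;> rcases le_total t 0 with h₂ | h₂ <;>
      simp only [h₁, h₂, max_eq_left, max_eq_right] <;> constructor <;> nlinarith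
  rw [hasDerivAt_iff_isLittleO_nhds_zero]
  have hsq : (fun h : ℝ => h ^ 2) =o[nhds 0] (fun h : ℝ => h) := by
    simpa only [pow_one] using
      Asymptotics.isLittleO_pow_pow (𝕜 := ℝ) (m := 1) (n := 2) one_lt_two
  refine (Asymptotics.IsBigO.of_bound 1 (Eventually.of_forall fun h => ?_)).trans_isLittleO hsq
  simpa only [smul_eq_mul, Real.norm_eq_abs, abs_pow, sq_abs, one_mul] using hquad h

lemma contDiff_sq_max_zero : ContDiff ℝ 1 (fun s : ℝ => max s 0 ^ 2) := by
  have hderiv : deriv (fun s : ℝ => max s 0 ^ 2) = fun t => 2 * max t 0 :=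
    funext fun t => (hasDerivAt_sq_max_zero t).deriv
  rw [contDiff_one_iff_deriv, hderiv]
  exact ⟨fun t => (hasDerivAt_sq_max_zero t).differentiableAt, by fun_prop⟩

/-- The test function `((v - k)₊)²` cut off to `Ω`. It is `C¹` on the whole space as soon as
`v < k` on the boundary of `Ω`. -/
def truncSq {E : Type*} (Ω : Set E) (v : E → ℝ) (k : ℝ) : E → ℝ :=
  Ω.indicator fun x => max (v x - k) 0 ^ 2

variable {E : Type*} {Ω : Set E} {v : E → ℝ} {k : ℝ}

lemma truncSq_nonneg (x : E) : 0 ≤ truncSq Ω v k x :=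
  indicator_nonneg (fun _ _ => sq_nonneg _) x

lemma truncSq_of_mem {x : E} (hx : x ∈ Ω) (hk : k ≤ v x) : truncSq Ω v k x = (v x - k) ^ 2 := by
  rw [truncSq, indicator_of_mem hx, max_eq_left (sub_nonneg.2 hk)]

lemma truncSq_of_notMem {x : E} (hx : x ∉ Ω ∩ {y | k < v y}) : truncSq Ω v k x = 0 := by
  by_cases hΩ : x ∈ Ω
  · have hk : v x ≤ k := not_lt.1 fun h => hx ⟨hΩ, h⟩
    rw [truncSq, indicator_of_mem hΩ, max_eq_right (sub_nonpos.2 hk), zero_pow two_ne_zero]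
  · exact indicator_of_notMem hΩ _

lemma hasCompactSupport_truncSq [PseudoMetricSpace E] [ProperSpace E] (hΩ : Bornology.IsBounded Ω) :
    HasCompactSupport (truncSq Ω v k) :=
  .of_support_subset_isCompact hΩ.isCompact_closure (support_indicator_subset.trans subset_closure)

lemma truncSq_eventuallyEq_of_mem [TopologicalSpace E] (hΩ : IsOpen Ω) {x : E} (hx : x ∈ Ω) :
    truncSq Ω v k =ᶠ[nhds x] fun y => max (v y - k) 0 ^ 2 := by
  filter_upwards [hΩ.mem_nhds hx] with y hy
  exact indicator_of_mem hy _

lemma truncSq_eventuallyEq_of_notMem [TopologicalSpace E] (hΩ : IsOpen Ω)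
    (hv : Continuous v) (hk : ∀ x ∈ frontier Ω, v x < k) {x : E} (hx : x ∉ Ω) :
    truncSq Ω v k =ᶠ[nhds x] fun _ => 0 := by
  by_cases hcl : x ∈ closure Ω
  · have hvx : v x < k := hk x (by rw [hΩ.frontier_eq]; exact ⟨hcl, hx⟩)
    filter_upwards [hv.continuousAt.eventually_lt_const hvx] with y hy
    exact truncSq_of_notMem fun h => hy.not_gt h.2
  · filter_upwards [isClosed_closure.isOpen_compl.mem_nhds hcl] with y hy
    exact indicator_of_notMem (fun h => hy (subset_closure h)) _

variable [NormedAddCommGroup E] [NormedSpace ℝ E]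

lemma contDiff_truncSq (hΩ : IsOpen Ω) (hv : ContDiff ℝ 1 v) (hk : ∀ x ∈ frontier Ω, v x < k) :
    ContDiff ℝ 1 (truncSq Ω v k) := by
  refine contDiff_iff_contDiffAt.2 fun x => ?_
  by_cases hx : x ∈ Ω
  · exact (contDiff_sq_max_zero.comp (hv.sub contDiff_const)).contDiffAt.congr_of_eventuallyEq
      (truncSq_eventuallyEq_of_mem hΩ hx)
  · exact contDiffAt_const.congr_of_eventuallyEq
      (truncSq_eventuallyEq_of_notMem hΩ hv.continuous hk hx)

lemma fderiv_truncSq_of_mem (hΩ : IsOpen Ω) {x : E} (hx : x ∈ Ω) (hv : DifferentiableAt ℝ v x) :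
    fderiv ℝ (truncSq Ω v k) x = (2 * max (v x - k) 0) • fderiv ℝ v x := by
  rw [(truncSq_eventuallyEq_of_mem hΩ hx).fderiv_eq]
  exact ((hasDerivAt_sq_max_zero (v x - k)).comp_hasFDerivAt x
    (hv.hasFDerivAt.sub_const k)).fderiv

lemma fderiv_truncSq_of_notMem (hΩ : IsOpen Ω) (hv : ContDiff ℝ 1 v)
    (hk : ∀ x ∈ frontier Ω, v x < k) {x : E} (hx : x ∉ Ω ∩ {y | k < v y}) :
    fderiv ℝ (truncSq Ω v k) x = 0 := by
  by_cases hΩx : x ∈ Ω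
  · have hvx : v x ≤ k := not_lt.1 fun h => hx ⟨hΩx, h⟩
    rw [fderiv_truncSq_of_mem hΩ hΩx (hv.differentiable one_ne_zero x),
      max_eq_right (sub_nonpos.2 hvx), mul_zero, zero_smul]
  · rw [(truncSq_eventuallyEq_of_notMem hΩ hv.continuous hk hΩx).fderiv_eq, fderiv_const_apply]

end TruncatedSquare

section Mollification

variable {E : Type*} [NormedAddCommGroup E] [NormedSpace ℝ E] [FiniteDimensional ℝ E]

lemma exists_contDiff_approx_of_contDiff_one {φ : E → ℝ} (hφ : ContDiff ℝ 1 φ)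
    (hc : HasCompactSupport φ) (hφ₀ : ∀ x, 0 ≤ φ x) {ε : ℝ} (hε : 0 < ε) :
    ∃ ψ : E → ℝ, ContDiff ℝ (⊤ : ℕ∞) ψ ∧ (∀ x, 0 ≤ ψ x) ∧
      tsupport ψ ⊆ cthickening 1 (tsupport φ) ∧
      (∀ x, dist (ψ x) (φ x) ≤ ε) ∧ ∀ x, dist (fderiv ℝ ψ x) (fderiv ℝ φ x) ≤ ε := by
  borelize E
  let μ : Measure E := Measure.addHaar
  have hcont' : Continuous (fderiv ℝ φ) := hφ.continuous_fderiv one_ne_zero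
  obtain ⟨δ₁, hδ₁, hunif₁⟩ := uniformContinuous_iff.1
    (hc.uniformContinuous_of_continuous hφ.continuous) ε hε
  obtain ⟨δ₂, hδ₂, hunif₂⟩ := uniformContinuous_iff.1
    ((hc.fderiv ℝ).uniformContinuous_of_continuous hcont') ε hε
  obtain ⟨δ, hδ, hδ_lt⟩ := exists_between (lt_min one_pos (lt_min hδ₁ hδ₂))
  obtain ⟨hδ_one, hδ_lt₁, hδ_lt₂⟩ : δ < 1 ∧ δ < δ₁ ∧ δ < δ₂ := by simpa using hδ_lt
  let ρ : ContDiffBump (0 : E) := ⟨δ / 2, δ, half_pos hδ, half_lt_self hδ⟩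
  let ψ : E → ℝ := convolution (ρ.normed μ) φ (.lsmul ℝ ℝ) μ
  have hfderiv (x : E) :
      fderiv ℝ ψ x = convolution (ρ.normed μ) (fderiv ℝ φ) (.lsmul ℝ ℝ) μ x := by
    rw [(hc.hasFDerivAt_convolution_right _ ρ.continuous_normed.locallyIntegrable hφ x).fderiv]
    rfl
  have hsupp : Function.support ψ ⊆ cthickening 1 (tsupport φ) := by
    refine (support_convolution_subset _).trans ?_
    rw [ρ.support_normed_eq]
    rintro _ ⟨y, hy, w, hw, rfl⟩
    refine mem_cthickening_of_dist_le _ w 1 _ (subset_tsupport φ hw) ?_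
    rw [dist_eq_norm, add_sub_cancel_right]
    exact (mem_ball_zero_iff.1 hy).le.trans hδ_one.le
  refine ⟨ψ, ?_, fun x => ?_, closure_minimal hsupp isClosed_cthickening, fun x => ?_, fun x => ?_⟩
  · exact ρ.hasCompactSupport_normed.contDiff_convolution_left _ ρ.contDiff_normed
      hφ.continuous.locallyIntegrable
  · exact integral_nonneg fun t => mul_nonneg (ρ.nonneg_normed _) (hφ₀ _)
  · exact ρ.dist_normed_convolution_le hφ.continuous.aestronglyMeasurable
      fun y hy => (hunif₁ ((mem_ball.1 hy).trans hδ_lt₁)).le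
  · rw [hfderiv x]
    exact ρ.dist_normed_convolution_le hcont'.aestronglyMeasurable
      fun y hy => (hunif₂ ((mem_ball.1 hy).trans hδ_lt₂)).le

end Mollification

section WeakDivergence

variable {E : Type*} [NormedAddCommGroup E] [NormedSpace ℝ E] [MeasurableSpace E]

/-- The inequality `div V ≥ f` on the whole space in the sense of distributions. -/
structure WeakDivGE (μ : Measure E) (V : E → E) (f : E → ℝ) : Prop where
  locallyIntegrable_field : LocallyIntegrable V μ
  locallyIntegrable_rhs : LocallyIntegrable f μ
  integral_le_zero : ∀ φ : E → ℝ, ContDiff ℝ (⊤ : ℕ∞) φ → HasCompactSupport φ →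
    (∀ x, 0 ≤ φ x) → ∫ x, (f x * φ x + fderiv ℝ φ x (V x)) ∂μ ≤ 0

variable [FiniteDimensional ℝ E] [BorelSpace E] {μ : Measure E} {V : E → E} {f φ ψ : E → ℝ}

lemma integrable_mul_add_fderiv_apply (hV : LocallyIntegrable V μ) (hf : LocallyIntegrable f μ)
    (hφ : ContDiff ℝ 1 φ) (hc : HasCompactSupport φ) :
    Integrable (fun x => f x * φ x + fderiv ℝ φ x (V x)) μ := by
  have hcont' : Continuous (fderiv ℝ φ) := hφ.continuous_fderiv one_ne_zero
  obtain ⟨C, hC⟩ := (hc.fderiv ℝ).exists_bound_of_continuous hcont'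
  refine (hf.integrable_smul_right_of_hasCompactSupport hφ.continuous hc).add ?_
  have hsupp : Function.support (fun x => fderiv ℝ φ x (V x)) ⊆ tsupport φ := fun x hx => by
    by_contra hx'
    exact hx (by simp only [fderiv_of_notMem_tsupport ℝ hx', zero_apply])
  rw [← integrableOn_iff_integrable_of_support_subset hsupp]
  exact (ContinuousLinearMap.id ℝ (E →L[ℝ] ℝ)).integrable_of_bilin_of_bdd_left C
    hcont'.aestronglyMeasurable (ae_of_all _ hC) (hV.integrableOn_isCompact hc)

lemma integral_mul_add_fderiv_apply_le (hV : LocallyIntegrable V μ) (hf : LocallyIntegrable f μ)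
    (hφ : ContDiff ℝ 1 φ) (hψ : ContDiff ℝ 1 ψ) {K : Set E} (hK : IsCompact K)
    (hφK : tsupport φ ⊆ K) (hψK : tsupport ψ ⊆ K) {ε : ℝ} (hε : ∀ x, dist (ψ x) (φ x) ≤ ε)
    (hε' : ∀ x, dist (fderiv ℝ ψ x) (fderiv ℝ φ x) ≤ ε) :
    ∫ x, (f x * φ x + fderiv ℝ φ x (V x)) ∂μ ≤
      ∫ x, (f x * ψ x + fderiv ℝ ψ x (V x)) ∂μ + ε * ∫ x in K, (|f x| + ‖V x‖) ∂μ := by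
  have hintK : Integrable (K.indicator fun x => ε * (|f x| + ‖V x‖)) μ :=
    (integrable_indicator_iff hK.measurableSet).2 <|
      ((hf.integrableOn_isCompact hK).abs.add (hV.integrableOn_isCompact hK).norm).const_mul ε
  have hintψ := integrable_mul_add_fderiv_apply hV hf hψ
    (hK.of_isClosed_subset isClosed_closure hψK)
  rw [← integral_const_mul, ← integral_indicator hK.measurableSet, ← integral_add hintψ hintK]
  refine integral_mono (integrable_mul_add_fderiv_apply hV hf hφ
    (hK.of_isClosed_subset isClosed_closure hφK)) (hintψ.add hintK) fun x => ?_
  by_cases hx : x ∈ K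
  · have hfx : f x * (φ x - ψ x) ≤ |f x| * ε := (le_abs_self _).trans <| by
      rw [abs_mul, abs_sub_comm]
      exact mul_le_mul_of_nonneg_left (hε x) (abs_nonneg _)
    have hdist : ‖fderiv ℝ φ x - fderiv ℝ ψ x‖ ≤ ε := by
      rw [← dist_eq_norm, dist_comm]
      exact hε' x
    have hVx : (fderiv ℝ φ x - fderiv ℝ ψ x) (V x) ≤ ε * ‖V x‖ :=
      (le_abs_self _).trans (ContinuousLinearMap.le_of_opNorm_le _ hdist _)
    rw [sub_apply] at hVx
    simp only [indicator_of_mem hx]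
    linarith
  · have hxφ : x ∉ tsupport φ := fun h => hx (hφK h)
    have hxψ : x ∉ tsupport ψ := fun h => hx (hψK h)
    simp [hx, image_eq_zero_of_notMem_tsupport, fderiv_of_notMem_tsupport, hxφ, hxψ]

lemma WeakDivGE.integral_le_zero_of_contDiff_one (h : WeakDivGE μ V f) (hφ : ContDiff ℝ 1 φ)
    (hc : HasCompactSupport φ) (hφ₀ : ∀ x, 0 ≤ φ x) :
    ∫ x, (f x * φ x + fderiv ℝ φ x (V x)) ∂μ ≤ 0 := by
  set K : Set E := cthickening 1 (tsupport φ)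
  have hK : IsCompact K := hc.isCompact.cthickening
  set T : ℝ := ∫ x in K, (|f x| + ‖V x‖) ∂μ
  have : 0 ≤ T := integral_nonneg fun x => by positivity
  refine le_of_forall_pos_le_add fun η hη => ?_
  obtain ⟨ψ, hψ, hψ₀, hψK, hdist, hdist'⟩ :=
    exists_contDiff_approx_of_contDiff_one hφ hc hφ₀ (ε := η / (T + 1)) (by positivity)
  have hψ_le := h.integral_le_zero ψ hψ (hK.of_isClosed_subset isClosed_closure hψK) hψ₀
  have hclose := integral_mul_add_fderiv_apply_le h.locallyIntegrable_field h.locallyIntegrable_rhs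
    hφ (hψ.of_le (mod_cast le_top)) hK (self_subset_cthickening _) hψK hdist hdist'
  have hη_le : η / (T + 1) * T ≤ η := by
    rw [div_mul_eq_mul_div, div_le_iff₀ (by positivity)]
    nlinarith
  linarith

end WeakDivergence

section Sobolev

open Module

variable {E : Type*} [NormedAddCommGroup E] [NormedSpace ℝ E] [FiniteDimensional ℝ E]
  [MeasurableSpace E] [BorelSpace E] (μ : Measure E) [μ.IsAddHaarMeasure] {φ : E → ℝ}

lemma rpow_mul_measureReal_le_integral_norm_fderiv (hφ : ContDiff ℝ 1 φ) (hc : HasCompactSupport φ)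
    {σ : ℝ} (hσ : (finrank ℝ E : ℝ).HolderConjugate σ) {s : Set E} {t : ℝ} (ht : 0 ≤ t)
    (hs : ∀ x ∈ s, t ≤ φ x) :
    t ^ σ * μ.real s ≤
      lintegralPowLePowLIntegralFDerivConst μ σ * (∫ x, ‖fderiv ℝ φ x‖ ∂μ) ^ σ := by
  have hσ₀ : 0 ≤ σ := hσ.symm.nonneg
  have hint : Integrable (fderiv ℝ φ) μ :=
    (hφ.continuous_fderiv one_ne_zero).integrable_of_hasCompactSupport (hc.fderiv ℝ)
  have hI : 0 ≤ ∫ x, ‖fderiv ℝ φ x‖ ∂μ := integral_nonneg fun _ => norm_nonneg _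
  have hlower : ENNReal.ofReal t ^ σ * μ s ≤ ∫⁻ x, ‖φ x‖ₑ ^ σ ∂μ := by
    refine le_trans ?_ (mul_meas_ge_le_lintegral
      (hφ.continuous.measurable.enorm.pow_const σ) (ENNReal.ofReal t ^ σ))
    gcongr
    intro x hx
    rw [mem_ofPred_eq, Real.enorm_eq_ofReal_abs]
    gcongr
    exact (hs x hx).trans (le_abs_self _)
  have hupper := hlower.trans (lintegral_pow_le_pow_lintegral_fderiv μ hφ hc hσ)
  rw [← ofReal_integral_norm_eq_lintegral_enorm hint] at hupper
  have := ENNReal.toReal_mono (ENNReal.mul_ne_top ENNReal.coe_ne_top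
    (ENNReal.rpow_ne_top_of_nonneg hσ₀ ENNReal.ofReal_ne_top)) hupper
  simpa only [ENNReal.toReal_mul, ← ENNReal.toReal_rpow, ENNReal.toReal_ofReal ht,
    ENNReal.toReal_ofReal hI, ENNReal.coe_toReal, measureReal_def] using this

/-- A positive constant for which the Gagliardo–Nirenberg–Sobolev inequality
`pow_mul_measureReal_pow_le_integral_norm_fderiv` holds. The summand `1` makes it positive and
absorbs the power `n - 1` of Mathlib's constant into the power `n`. -/
def superlevelSobolevConst : ℝ :=
  lintegralPowLePowLIntegralFDerivConst μ ((finrank ℝ E : ℝ) / (finrank ℝ E - 1)) + 1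

lemma superlevelSobolevConst_pos : 0 < superlevelSobolevConst μ :=
  add_pos_of_nonneg_of_pos NNReal.zero_le_coe one_pos

lemma pow_mul_measureReal_pow_le_integral_norm_fderiv (hn : 2 ≤ finrank ℝ E)
    (hφ : ContDiff ℝ 1 φ) (hc : HasCompactSupport φ) {s : Set E} {t : ℝ} (ht : 0 ≤ t)
    (hs : ∀ x ∈ s, t ≤ φ x) :
    t ^ finrank ℝ E * μ.real s ^ (finrank ℝ E - 1) ≤
      (superlevelSobolevConst μ * ∫ x, ‖fderiv ℝ φ x‖ ∂μ) ^ finrank ℝ E := by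
  set I : ℝ := ∫ x, ‖fderiv ℝ φ x‖ ∂μ
  set σ : ℝ := (finrank ℝ E : ℝ) / (finrank ℝ E - 1) with hσ
  set C₀ : ℝ := ↑(lintegralPowLePowLIntegralFDerivConst μ σ)
  have hI : 0 ≤ I := integral_nonneg fun _ => norm_nonneg _
  have hC₀ : 0 ≤ C₀ := NNReal.zero_le_coe
  have hconj : (finrank ℝ E : ℝ).HolderConjugate σ := .conjExponent (by exact_mod_cast hn)
  have hcast : ((finrank ℝ E - 1 : ℕ) : ℝ) = finrank ℝ E - 1 := by
    rw [Nat.cast_sub (by omega), Nat.cast_one]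
  have hrpow_pow (y : ℝ) (hy : 0 ≤ y) : (y ^ σ) ^ (finrank ℝ E - 1) = y ^ finrank ℝ E := by
    rw [← Real.rpow_natCast, ← Real.rpow_mul hy, hcast, hσ,
      div_mul_cancel₀ _ hconj.sub_one_ne_zero, Real.rpow_natCast]
  calc t ^ finrank ℝ E * μ.real s ^ (finrank ℝ E - 1)
      = (t ^ σ * μ.real s) ^ (finrank ℝ E - 1) := by rw [mul_pow, hrpow_pow t ht]
    _ ≤ (C₀ * I ^ σ) ^ (finrank ℝ E - 1) := by
        gcongr ?_ ^ _
        exact rpow_mul_measureReal_le_integral_norm_fderiv μ hφ hc hconj ht hs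
    _ = C₀ ^ (finrank ℝ E - 1) * I ^ finrank ℝ E := by rw [mul_pow, hrpow_pow I hI]
    _ ≤ (C₀ + 1) ^ finrank ℝ E * I ^ finrank ℝ E := by
        gcongr
        calc C₀ ^ (finrank ℝ E - 1) ≤ (C₀ + 1) ^ (finrank ℝ E - 1) := by gcongr; linarith
          _ ≤ (C₀ + 1) ^ finrank ℝ E := pow_le_pow_right₀ (by linarith) (Nat.sub_le _ 1)
    _ = (superlevelSobolevConst μ * I) ^ finrank ℝ E := (mul_pow _ _ _).symm

end Sobolev

section DeGiorgi

open Module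

variable {E : Type*} [NormedAddCommGroup E] [NormedSpace ℝ E] [MeasurableSpace E]

/-- The hypotheses under which De Giorgi's method applies to `v` above the level `k₀` in `Ω`: there
the flux `V` is coercive along `Dv`, in the form that makes `((v - k)₊)²` a good test function in
`div V ≥ f`. The oscillation of `v` above `k₀` is at most `d`, `m` is a lower bound for the source,
`τ` weights the `L¹` norm of the gradient, the error term `K` is only needed on the set `S`, and `w`
stands for the values of `v - k` at levels `k ≥ k₀`. -/
structure SuperlevelCoercive (μ : Measure E) (V : E → E) (f v : E → ℝ) (Ω S : Set E)
    (k₀ d m τ K : ℝ) : Prop where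
  contDiff : ContDiff ℝ 1 v
  isOpen : IsOpen Ω
  isBounded : Bornology.IsBounded Ω
  lt_of_mem_frontier : ∀ x ∈ frontier Ω, v x < k₀
  le_add : ∀ x ∈ Ω, v x ≤ k₀ + d
  measurableSet : MeasurableSet S
  coercive : ∀ᵐ x ∂μ, x ∈ Ω → k₀ < v x → ∀ w ∈ Icc 0 d,
    m * w + τ * ‖fderiv ℝ v x‖ ≤ f x * w + 2 * fderiv ℝ v x (V x) + S.indicator (fun _ => K) x

namespace SuperlevelCoercive

variable {μ : Measure E} {V : E → E} {f v : E → ℝ}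
  {Ω S : Set E} {k₀ d m τ K : ℝ}

lemma pointwise_energy_le (h : SuperlevelCoercive μ V f v Ω S k₀ d m τ K) (hK : 0 ≤ K) {k : ℝ}
    (hk : k₀ ≤ k) :
    ∀ᵐ x ∂μ, m * truncSq Ω v k x + τ / 2 * ‖fderiv ℝ (truncSq Ω v k) x‖ ≤
      (f x * truncSq Ω v k x + fderiv ℝ (truncSq Ω v k) x (V x)) +
        (Ω ∩ {x | k < v x} ∩ S).indicator (fun _ => K * d) x := by
  filter_upwards [h.coercive] with x hx
  by_cases hxk : x ∈ Ω ∩ {x | k < v x}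
  · obtain ⟨hΩ, hkv : k < v x⟩ := hxk
    have hw : 0 ≤ v x - k := sub_nonneg.2 hkv.le
    have hwd : v x - k ≤ d := by linarith [h.le_add x hΩ]
    have hcoer := mul_le_mul_of_nonneg_right (hx hΩ (hk.trans_lt hkv) _ ⟨hw, hwd⟩) hw
    have herr : S.indicator (fun _ => K) x * (v x - k) ≤
        (Ω ∩ {x | k < v x} ∩ S).indicator (fun _ => K * d) x := by
      by_cases hS : x ∈ S
      · rw [indicator_of_mem hS, indicator_of_mem (show x ∈ Ω ∩ {x | k < v x} ∩ S from
          ⟨⟨hΩ, hkv⟩, hS⟩)]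
        gcongr
      · rw [indicator_of_notMem hS, indicator_of_notMem fun h' => hS h'.2, zero_mul]
    rw [truncSq_of_mem hΩ hkv.le,
      fderiv_truncSq_of_mem h.isOpen hΩ (h.contDiff.differentiable one_ne_zero x),
      max_eq_left hw, norm_smul, Real.norm_of_nonneg (by positivity), smul_apply, smul_eq_mul]
    linarith
  · have hfront (y : E) (hy : y ∈ frontier Ω) : v y < k := (h.lt_of_mem_frontier y hy).trans_le hk
    rw [truncSq_of_notMem hxk, fderiv_truncSq_of_notMem h.isOpen h.contDiff hfront hxk,
      indicator_of_notMem fun h' => hxk h'.1]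
    simp

lemma isOpen_superlevel (h : SuperlevelCoercive μ V f v Ω S k₀ d m τ K) (k : ℝ) :
    IsOpen (Ω ∩ {x | k < v x}) :=
  h.isOpen.inter (isOpen_lt continuous_const h.contDiff.continuous)

variable [FiniteDimensional ℝ E]

lemma measure_ne_top_of_subset [IsFiniteMeasureOnCompacts μ]
    (h : SuperlevelCoercive μ V f v Ω S k₀ d m τ K) {T : Set E} (hT : T ⊆ Ω) : μ T ≠ ∞ :=
  (h.isBounded.subset hT).measure_lt_top.ne

variable [BorelSpace E]

lemma energy_le [IsFiniteMeasureOnCompacts μ] (h : SuperlevelCoercive μ V f v Ω S k₀ d m τ K)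
    (hV : WeakDivGE μ V f) (hK : 0 ≤ K) {k : ℝ} (hk : k₀ ≤ k) :
    m * ∫ x, truncSq Ω v k x ∂μ + τ / 2 * ∫ x, ‖fderiv ℝ (truncSq Ω v k) x‖ ∂μ ≤
      K * d * μ.real (Ω ∩ {x | k < v x} ∩ S) := by
  have hφ : ContDiff ℝ 1 (truncSq Ω v k) :=
    contDiff_truncSq h.isOpen h.contDiff fun x hx => (h.lt_of_mem_frontier x hx).trans_le hk
  have hc : HasCompactSupport (truncSq Ω v k) := hasCompactSupport_truncSq h.isBounded
  have hmeas : MeasurableSet (Ω ∩ {x | k < v x} ∩ S) :=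
    (h.isOpen_superlevel k).measurableSet.inter h.measurableSet
  have hintφ := (hφ.continuous.integrable_of_hasCompactSupport hc (μ := μ)).const_mul m
  have hintD := (((hφ.continuous_fderiv one_ne_zero).integrable_of_hasCompactSupport
    (hc.fderiv ℝ) (μ := μ)).norm).const_mul (τ / 2)
  have hintV := integrable_mul_add_fderiv_apply hV.locallyIntegrable_field
    hV.locallyIntegrable_rhs hφ hc
  have hintS : Integrable ((Ω ∩ {x | k < v x} ∩ S).indicator fun _ => K * d) μ :=
    (integrable_indicator_iff hmeas).2
      (integrableOn_const (h.measure_ne_top_of_subset (inter_subset_left.trans inter_subset_left)))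
  have hle := integral_mono_ae (hintφ.add hintD) (hintV.add hintS) (h.pointwise_energy_le hK hk)
  simp only [Pi.add_apply] at hle
  rw [integral_add hintφ hintD, integral_add hintV hintS, integral_indicator hmeas,
    setIntegral_const, integral_const_mul, integral_const_mul, smul_eq_mul] at hle
  linarith [hV.integral_le_zero_of_contDiff_one hφ hc truncSq_nonneg]

lemma mul_sq_mul_measureReal_le [IsFiniteMeasureOnCompacts μ]
    (h : SuperlevelCoercive μ V f v Ω S k₀ d m τ K) (hV : WeakDivGE μ V f) (hm : 0 ≤ m)
    (hτ : 0 ≤ τ) (hK : 0 ≤ K) {k l : ℝ} (hk : k₀ ≤ k) (hkl : k ≤ l) :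
    m * (l - k) ^ 2 * μ.real (Ω ∩ {x | l < v x}) ≤ K * d * μ.real (Ω ∩ {x | k < v x} ∩ S) := by
  have hφ : ContDiff ℝ 1 (truncSq Ω v k) :=
    contDiff_truncSq h.isOpen h.contDiff fun x hx => (h.lt_of_mem_frontier x hx).trans_le hk
  have hint : Integrable (truncSq Ω v k) μ :=
    hφ.continuous.integrable_of_hasCompactSupport (hasCompactSupport_truncSq h.isBounded)
  have hsub : Ω ∩ {x | l < v x} ⊆ {x | (l - k) ^ 2 ≤ truncSq Ω v k x} := by
    rintro x ⟨hx, hlx : l < v x⟩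
    rw [mem_ofPred_eq, truncSq_of_mem hx (hkl.trans hlx.le)]
    have : 0 ≤ l - k := sub_nonneg.2 hkl
    gcongr
  have hcheb : (l - k) ^ 2 * μ.real (Ω ∩ {x | l < v x}) ≤ ∫ x, truncSq Ω v k x ∂μ := by
    rcases hkl.eq_or_lt with rfl | hlt
    · simpa using integral_nonneg (truncSq_nonneg (Ω := Ω) (v := v) (k := k))
    refine le_trans ?_ (mul_meas_ge_le_integral_of_nonneg (ae_of_all _ truncSq_nonneg) hint
      ((l - k) ^ 2))
    gcongr
    exact (hint.measure_ge_lt_top (pow_pos (sub_pos.2 hlt) 2)).ne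
  have hgrad : 0 ≤ τ / 2 * ∫ x, ‖fderiv ℝ (truncSq Ω v k) x‖ ∂μ :=
    mul_nonneg (by positivity) (integral_nonneg fun _ => norm_nonneg _)
  linarith [h.energy_le hV hK hk, mul_le_mul_of_nonneg_left hcheb hm]

variable [μ.IsAddHaarMeasure]

lemma pow_mul_measureReal_pow_le (h : SuperlevelCoercive μ V f v Ω S k₀ d m τ K)
    (hV : WeakDivGE μ V f) (hn : 2 ≤ finrank ℝ E) (hm : 0 ≤ m) (hτ : 0 < τ) (hK : 0 ≤ K)
    {k l : ℝ} (hk : k₀ ≤ k) (hkl : k ≤ l) :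
    ((l - k) ^ 2) ^ finrank ℝ E * μ.real (Ω ∩ {x | l < v x}) ^ (finrank ℝ E - 1) ≤
      (superlevelSobolevConst μ * (2 * K * d / τ) * μ.real (Ω ∩ {x | k < v x} ∩ S)) ^
        finrank ℝ E := by
  have hφ : ContDiff ℝ 1 (truncSq Ω v k) :=
    contDiff_truncSq h.isOpen h.contDiff fun x hx => (h.lt_of_mem_frontier x hx).trans_le hk
  have hgrad : ∫ x, ‖fderiv ℝ (truncSq Ω v k) x‖ ∂μ ≤
      2 * K * d / τ * μ.real (Ω ∩ {x | k < v x} ∩ S) := by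
    have hzero : 0 ≤ m * ∫ x, truncSq Ω v k x ∂μ := mul_nonneg hm (integral_nonneg truncSq_nonneg)
    rw [div_mul_eq_mul_div, le_div_iff₀ hτ]
    linarith [h.energy_le hV hK hk]
  have hsob := pow_mul_measureReal_pow_le_integral_norm_fderiv μ hn hφ
    (hasCompactSupport_truncSq h.isBounded) (sq_nonneg (l - k)) (s := Ω ∩ {x | l < v x}) <| by
      rintro x ⟨hx, hlx : l < v x⟩
      rw [truncSq_of_mem hx (hkl.trans hlx.le)]
      have : 0 ≤ l - k := sub_nonneg.2 hkl
      gcongr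
  refine hsob.trans ?_
  have : 0 ≤ ∫ x, ‖fderiv ℝ (truncSq Ω v k) x‖ ∂μ := integral_nonneg fun _ => norm_nonneg _
  have hCs := (superlevelSobolevConst_pos μ).le
  rw [mul_assoc (superlevelSobolevConst μ)]
  gcongr

lemma lt_measureReal_of_add_lt (h : SuperlevelCoercive μ V f v Ω S k₀ d m τ K)
    (hV : WeakDivGE μ V f) (hn : 2 ≤ finrank ℝ E) (hm : 0 ≤ m) (hτ : 0 < τ) (hK : 0 < K)
    (hd : 0 < d) {k d' : ℝ} (hk : k₀ ≤ k) (hd' : 0 < d') {x : E} (hx : x ∈ Ω)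
    (hkx : k + d' < v x) :
    (d' ^ 2 * (1 / 4) ^ finrank ℝ E / (superlevelSobolevConst μ * (2 * K * d / τ))) ^ finrank ℝ E <
      μ.real (Ω ∩ {x | k < v x} ∩ S) := by
  by_contra! hsmall
  have hΛ : 0 < superlevelSobolevConst μ * (2 * K * d / τ) :=
    mul_pos (superlevelSobolevConst_pos μ) (by positivity)
  have hmono (k l : ℝ) (hkl : k ≤ l) :
      μ.real (Ω ∩ {x | l < v x} ∩ S) ≤ μ.real (Ω ∩ {x | k < v x} ∩ S) :=
    measureReal_mono (fun y hy => ⟨⟨hy.1.1, hkl.trans_lt hy.1.2⟩, hy.2⟩)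
      (h.measure_ne_top_of_subset (inter_subset_left.trans inter_subset_left))
  have hzero : μ.real (Ω ∩ {x | k + d' < v x} ∩ S) = 0 := by
    refine eq_zero_of_deGiorgi_decay hn (F := fun l => μ.real (Ω ∩ {x | l < v x} ∩ S))
      (fun _ => measureReal_nonneg) hmono hd' hΛ (fun k' l hkk' hkl => le_trans ?_
        (h.pow_mul_measureReal_pow_le hV hn hm hτ hK.le (hk.trans hkk') hkl.le)) hsmall
    gcongr ?_ * ?_ ^ _
    exact measureReal_mono inter_subset_left (h.measure_ne_top_of_subset inter_subset_left)
  obtain ⟨l, hkl, hlx⟩ := exists_between hkx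
  have hdecay := h.pow_mul_measureReal_pow_le hV hn hm hτ hK.le
    (hk.trans (le_add_of_nonneg_right hd'.le)) hkl.le
  rw [hzero, mul_zero, zero_pow (by omega)] at hdecay
  have hpos : 0 < μ.real (Ω ∩ {x | l < v x}) :=
    ENNReal.toReal_pos ((h.isOpen_superlevel l).measure_pos μ ⟨x, hx, hlx⟩).ne'
      (h.measure_ne_top_of_subset inter_subset_left)
  have : 0 < l - (k + d') := sub_pos.2 hkl
  exact hdecay.not_gt (by positivity)

end SuperlevelCoercive

end DeGiorgi

section MaximumPrinciple

open Module

lemma drift_le_coercive_add {p C₁ B d w D P y : ℝ} (hp : 1 ≤ p) (hC₁ : 0 < C₁) (hB : 0 ≤ B)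
    (hD : 0 ≤ D) (hP : C₁ * D ^ p ≤ P) (hy : -(B * D ^ (p - 1)) ≤ y) (hw : w ∈ Icc 0 d) :
    C₁ * d ^ (p - 1) * D ≤ y * w + 2 * P + C₁ * ((B / C₁) ^ p + 1) * d ^ p := by
  have hd : 0 ≤ d := hw.1.trans hw.2
  have hlin : d ^ (p - 1) * D ≤ d ^ p + D ^ p := by
    simpa only [Real.rpow_one] using rpow_sub_mul_rpow_le_add hd hD zero_le_one hp
  have hyoung : B / C₁ * d * D ^ (p - 1) ≤ (B / C₁) ^ p * d ^ p + D ^ p := by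
    have := rpow_sub_mul_rpow_le_add (s := B / C₁ * d) (by positivity) hD (sub_nonneg.2 hp)
      (sub_le_self p zero_le_one)
    rwa [sub_sub_cancel, Real.rpow_one, Real.mul_rpow (by positivity) hd] at this
  have hdrift : -(C₁ * (B / C₁ * d * D ^ (p - 1))) ≤ y * w := calc
    -(C₁ * (B / C₁ * d * D ^ (p - 1))) = -(B * D ^ (p - 1) * d) := by field_simp
    _ ≤ -(B * D ^ (p - 1) * w) := by
        have := hw.2
        gcongr
    _ ≤ y * w := by linarith [mul_le_mul_of_nonneg_right hy hw.1]
  have h₁ := mul_le_mul_of_nonneg_left hlin hC₁.le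
  have h₂ := mul_le_mul_of_nonneg_left hyoung hC₁.le
  linarith

lemma tendsto_measureReal_inter_superlevel {X : Type*} [MeasurableSpace X] {μ : Measure X}
    {T : Set X} (hT : MeasurableSet T) (hμT : μ T ≠ ∞) {u : X → ℝ} (hu : Measurable u) {s : ℝ}
    (hs : ∀ x ∈ T, u x < s) :
    Tendsto (fun r => μ.real (T ∩ {x | s - r < u x})) (nhdsWithin 0 (Ioi 0)) (nhds 0) := by
  have hempty : ⋂ r > (0 : ℝ), T ∩ {x | s - r < u x} = ∅ := by
    refine eq_empty_of_forall_notMem fun x hx => ?_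
    have hxT : x ∈ T := (mem_iInter₂.1 hx 1 one_pos).1
    have hgap : s - (s - u x) < u x := (mem_iInter₂.1 hx (s - u x) (sub_pos.2 (hs x hxT))).2
    exact hgap.ne (sub_sub_cancel s (u x))
  have hlim := tendsto_measure_biInter_gt (μ := μ) (a := (0 : ℝ))
    (s := fun r => T ∩ {x | s - r < u x})
    (fun r _ => (hT.inter (measurableSet_lt measurable_const hu)).nullMeasurableSet)
    (fun i j _ hij x hx => ⟨hx.1, (sub_le_sub_left hij s).trans_lt hx.2⟩)
    ⟨1, one_pos, measure_ne_top_of_subset inter_subset_left hμT⟩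
  rw [hempty, measure_empty] at hlim
  exact (ENNReal.tendsto_toReal ENNReal.zero_ne_top).comp hlim

variable {E : Type*} [NormedAddCommGroup E] [NormedSpace ℝ E] [MeasurableSpace E]
  [BorelSpace E] {μ : Measure E} {V : E → E} {f u : E → ℝ} {Ω : Set E} {p C₁ B : ℝ}

lemma superlevelCoercive_of_drift_bound (hp : 1 < p) (hC₁ : 0 < C₁) (hB : 0 ≤ B) (hΩ : IsOpen Ω)
    (hΩb : Bornology.IsBounded Ω) (hu : ContDiff ℝ 1 u)
    (hcoer : ∀ x ∈ Ω, C₁ * ‖fderiv ℝ u x‖ ^ p ≤ fderiv ℝ u x (V x))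
    (hf : ∀ x ∈ Ω, -(B * ‖fderiv ℝ u x‖ ^ (p - 1)) ≤ f x) {k₀ d : ℝ}
    (hfr : ∀ x ∈ frontier Ω, u x < k₀) (hle : ∀ x ∈ Ω, u x ≤ k₀ + d) :
    SuperlevelCoercive μ V f u Ω {x | fderiv ℝ u x ≠ 0} k₀ d 0 (C₁ * d ^ (p - 1))
      (C₁ * ((B / C₁) ^ p + 1) * d ^ p) where
  contDiff := hu
  isOpen := hΩ
  isBounded := hΩb
  lt_of_mem_frontier := hfr
  le_add := hle
  measurableSet := (isOpen_ne_fun (hu.continuous_fderiv one_ne_zero) continuous_const).measurableSet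
  coercive := ae_of_all _ fun x hx _ w hw => by
    by_cases hD : fderiv ℝ u x = 0
    · have hfx : 0 ≤ f x := by
        simpa [hD, Real.zero_rpow (sub_pos.2 hp).ne'] using hf x hx
      simp [hD, mul_nonneg hfx hw.1]
    · rw [indicator_of_mem (show x ∈ {x | fderiv ℝ u x ≠ 0} from hD), zero_mul, zero_add]
      exact drift_le_coercive_add hp.le hC₁ hB (norm_nonneg _) (hcoer x hx) (hf x hx) hw

variable [FiniteDimensional ℝ E] [μ.IsAddHaarMeasure]

-- The bound does not depend on `r`, while these sets shrink to `∅` as `r → 0`: the contradiction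
-- is the maximum principle.
lemma WeakDivGE.lt_measureReal_superlevel_inter_fderiv_ne_zero (h : WeakDivGE μ V f)
    (hn : 2 ≤ finrank ℝ E) (hp : 1 < p) (hC₁ : 0 < C₁) (hB : 0 ≤ B) (hΩ : IsOpen Ω)
    (hΩb : Bornology.IsBounded Ω) (hu : ContDiff ℝ 1 u)
    (hcoer : ∀ x ∈ Ω, C₁ * ‖fderiv ℝ u x‖ ^ p ≤ fderiv ℝ u x (V x))
    (hf : ∀ x ∈ Ω, -(B * ‖fderiv ℝ u x‖ ^ (p - 1)) ≤ f x) {x₁ : E} (hx₁ : x₁ ∈ Ω)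
    (hmax : ∀ x ∈ Ω, u x ≤ u x₁) {r : ℝ} (hr : 0 < r)
    (hfr : ∀ x ∈ frontier Ω, u x < u x₁ - r) :
    ((1 / 2) ^ 2 * (1 / 4) ^ finrank ℝ E /
        (superlevelSobolevConst μ * (2 * ((B / C₁) ^ p + 1)))) ^ finrank ℝ E <
      μ.real (Ω ∩ {x | u x₁ - r < u x} ∩ {x | fderiv ℝ u x ≠ 0}) := by
  have hcoercive := superlevelCoercive_of_drift_bound (μ := μ) (k₀ := u x₁ - r) (d := r) hp hC₁ hB
    hΩ hΩb hu hcoer hf hfr fun x hx => by simpa using hmax x hx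
  have hlt := hcoercive.lt_measureReal_of_add_lt h hn le_rfl
    (mul_pos hC₁ (Real.rpow_pos_of_pos hr _)) (by positivity) hr le_rfl
    (half_pos hr) hx₁ (by linarith)
  refine (le_of_eq ?_).trans_lt hlt
  have hr₀ : r ≠ 0 := hr.ne'
  have hrp : r ^ p ≠ 0 := (Real.rpow_pos_of_pos hr p).ne'
  have hCs := (superlevelSobolevConst_pos μ).ne'
  have hQ : (B / C₁) ^ p + 1 ≠ 0 := by positivity
  rw [Real.rpow_sub_one hr₀]
  congr 1
  field_simp

lemma WeakDivGE.le_of_forall_frontier_le (h : WeakDivGE μ V f) (hn : 2 ≤ finrank ℝ E)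
    (hp : 1 < p) (hC₁ : 0 < C₁) (hB : 0 ≤ B) (hΩ : IsOpen Ω) (hΩb : Bornology.IsBounded Ω)
    (hu : ContDiff ℝ 1 u)
    (hcoer : ∀ x ∈ Ω, C₁ * ‖fderiv ℝ u x‖ ^ p ≤ fderiv ℝ u x (V x))
    (hf : ∀ x ∈ Ω, -(B * ‖fderiv ℝ u x‖ ^ (p - 1)) ≤ f x) {M : ℝ}
    (hM : ∀ x ∈ frontier Ω, u x ≤ M) {x : E} (hx : x ∈ Ω) : u x ≤ M := by
  by_contra! hMx
  obtain ⟨x₁, hx₁cl, hmax⟩ := hΩb.isCompact_closure.exists_isMaxOn ⟨x, subset_closure hx⟩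
    hu.continuous.continuousOn
  have hMx₁ : M < u x₁ := hMx.trans_le (hmax (subset_closure hx))
  have hx₁ : x₁ ∈ Ω := by
    by_contra hx₁
    exact (hM x₁ (hΩ.frontier_eq ▸ ⟨hx₁cl, hx₁⟩)).not_gt hMx₁
  set T : Set E := Ω ∩ {y | fderiv ℝ u y ≠ 0}
  have hT : MeasurableSet T := hΩ.measurableSet.inter
    (isOpen_ne_fun (hu.continuous_fderiv one_ne_zero) continuous_const).measurableSet
  have hTlt (y : E) (hy : y ∈ T) : u y < u x₁ := by
    refine lt_of_le_of_ne (hmax (subset_closure hy.1)) fun hyx₁ => hy.2 ?_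
    refine IsLocalMax.fderiv_eq_zero ?_
    filter_upwards [hΩ.mem_nhds hy.1] with y' hy'
    exact hyx₁ ▸ hmax (subset_closure hy')
  have hlim := tendsto_measureReal_inter_superlevel (μ := μ) hT
    (hΩb.subset inter_subset_left).measure_lt_top.ne hu.continuous.measurable hTlt
  set c : ℝ := ((1 / 2) ^ 2 * (1 / 4) ^ finrank ℝ E /
    (superlevelSobolevConst μ * (2 * ((B / C₁) ^ p + 1)))) ^ finrank ℝ E
  have hc : 0 < c := by
    have := superlevelSobolevConst_pos μ
    positivity
  refine (ge_of_tendsto (b := c) hlim ?_).not_gt hc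
  filter_upwards [Ioo_mem_nhdsGT (sub_pos.2 hMx₁)] with r hr
  rw [inter_right_comm]
  exact (h.lt_measureReal_superlevel_inter_fderiv_ne_zero hn hp hC₁ hB hΩ hΩb hu hcoer hf hx₁
    (fun y hy => hmax (subset_closure hy)) hr.1
    fun y hy => (hM y hy).trans_lt (by linarith [hr.2])).le

end MaximumPrinciple

section Growth

open Module

/-- The constant in front of `λ ^ p` in the error term when the energy inequality is tested with
a paraboloid of slope of order `λ`. -/
def coercivityConst (p C₁ C₂ : ℝ) : ℝ := C₁ * ((16 * C₂ / C₁) ^ p + 11) / 2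

lemma coercivityConst_pos {p C₁ C₂ : ℝ} (hC₁ : 0 < C₁) (hC₂ : 0 ≤ C₂) :
    0 < coercivityConst p C₁ C₂ := by
  unfold coercivityConst
  positivity

lemma drift_le_coercive_sub_add {F : Type*} [NormedAddCommGroup F] [NormedSpace ℝ F]
    {p α C₁ C₂ B δ lam m w y : ℝ} {L ℓ : F →L[ℝ] ℝ} {X : F} (hp : 1 ≤ p) (hα : 0 ≤ α) (hαp : α ≤ p)
    (hC₁ : 0 < C₁) (hC₂ : 0 ≤ C₂) (hB : 0 ≤ B) (hlam : 0 ≤ lam) (hL : C₁ * ‖L‖ ^ p ≤ L X)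
    (hX : ‖X‖ ≤ C₂ * ‖L‖ ^ (p - 1)) (hℓ : ‖ℓ‖ ≤ 4 * lam) (hδB : δ * B ≤ C₁ / 4 * lam ^ (p - α))
    (hy : m - B * ‖L‖ ^ α ≤ y) (hw : w ∈ Icc 0 (2 * δ)) :
    m * w + C₁ * lam ^ (p - 1) * ‖L - ℓ‖ ≤
      y * w + 2 * (L - ℓ) X + coercivityConst p C₁ C₂ * lam ^ p := by
  set D : ℝ := ‖L‖
  have hD : 0 ≤ D := norm_nonneg L
  have hdrift : B * D ^ α * w ≤ C₁ / 2 * (lam ^ p + D ^ p) := calc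
    B * D ^ α * w ≤ B * D ^ α * (2 * δ) := mul_le_mul_of_nonneg_left hw.2 (by positivity)
    _ = 2 * (δ * B) * D ^ α := by ring
    _ ≤ 2 * (C₁ / 4 * lam ^ (p - α)) * D ^ α := by gcongr
    _ = C₁ / 2 * (lam ^ (p - α) * D ^ α) := by ring
    _ ≤ C₁ / 2 * (lam ^ p + D ^ p) := by
        gcongr
        exact rpow_sub_mul_rpow_le_add hlam hD hα hαp
  have hsource : (m - B * D ^ α) * w ≤ y * w := mul_le_mul_of_nonneg_right hy hw.1
  have hflux : 2 * ℓ X ≤ C₁ / 2 * ((16 * C₂ / C₁) ^ p * lam ^ p + D ^ p) := calc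
    2 * ℓ X ≤ 2 * (4 * lam * (C₂ * D ^ (p - 1))) := by
        gcongr
        exact (le_abs_self _).trans ((ℓ.le_of_opNorm_le hℓ X).trans (by gcongr))
    _ = C₁ / 2 * (16 * C₂ / C₁ * lam * D ^ (p - 1)) := by field_simp; ring
    _ ≤ C₁ / 2 * ((16 * C₂ / C₁ * lam) ^ p + D ^ p) := by
        have := rpow_sub_mul_rpow_le_add (s := 16 * C₂ / C₁ * lam) (by positivity) hD
          (sub_nonneg.2 hp) (sub_le_self p zero_le_one)
        rw [sub_sub_cancel, Real.rpow_one] at this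
        gcongr
    _ = C₁ / 2 * ((16 * C₂ / C₁) ^ p * lam ^ p + D ^ p) := by
        rw [Real.mul_rpow (by positivity) hlam]
  have hgrad : C₁ * lam ^ (p - 1) * ‖L - ℓ‖ ≤ C₁ * (5 * lam ^ p + D ^ p) := calc
    C₁ * lam ^ (p - 1) * ‖L - ℓ‖ ≤ C₁ * lam ^ (p - 1) * (D + 4 * lam) := by
        gcongr
        exact (norm_sub_le _ _).trans (by gcongr)
    _ = C₁ * (4 * (lam ^ (p - 1) * lam ^ (1 : ℝ)) + lam ^ (p - 1) * D ^ (1 : ℝ)) := by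
        rw [Real.rpow_one, Real.rpow_one]
        ring
    _ ≤ C₁ * (4 * lam ^ p + (lam ^ p + D ^ p)) := by
        gcongr
        · rw [← Real.rpow_add_of_nonneg hlam (sub_nonneg.2 hp) zero_le_one, sub_add_cancel]
        · exact rpow_sub_mul_rpow_le_add hlam hD zero_le_one hp
    _ = C₁ * (5 * lam ^ p + D ^ p) := by ring
  rw [sub_apply, coercivityConst]
  linarith

lemma measureReal_ball_pos {X : Type*} [PseudoMetricSpace X] [ProperSpace X] [MeasurableSpace X]
    (μ : Measure X) [μ.IsOpenPosMeasure] [IsFiniteMeasureOnCompacts μ] (x : X) {r : ℝ}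
    (hr : 0 < r) : 0 < μ.real (ball x r) :=
  ENNReal.toReal_pos (measure_ball_pos μ x hr).ne' measure_ball_lt_top.ne

variable {E : Type*} [NormedAddCommGroup E] [InnerProductSpace ℝ E]

lemma fderiv_sub_mul_norm_sub_sq {u : E → ℝ} {x : E} (hu : DifferentiableAt ℝ u x) (c : ℝ) (z : E) :
    fderiv ℝ (fun y => u y - c * ‖y - z‖ ^ 2) x =
      fderiv ℝ u x - (2 * c) • innerSL ℝ (x - z) := by
  have hpar := (((hasFDerivAt_id x).sub_const z).norm_sq).const_mul c
  refine (hu.hasFDerivAt.sub hpar).fderiv.trans ?_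
  ext y
  simp
  ring

lemma norm_smul_innerSL_sub_le {x z : E} {R δ : ℝ} (hR : 0 < R) (hδ : 0 ≤ δ) (hx : x ∈ ball z R) :
    ‖(2 * (2 * δ / R ^ 2)) • innerSL ℝ (x - z)‖ ≤ 4 * (δ / R) := by
  have hxz : ‖x - z‖ ≤ R := (mem_ball_iff_norm.1 hx).le
  rw [norm_smul, innerSL_apply_norm, Real.norm_of_nonneg (by positivity)]
  calc 2 * (2 * δ / R ^ 2) * ‖x - z‖ ≤ 2 * (2 * δ / R ^ 2) * R := by gcongr
    _ = 4 * (δ / R) := by field_simp; ring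

variable [MeasurableSpace E]

/-- The situation of the growth lemma for `div V ≥ f` in the ball of radius `R` around `z`: the
flux `V` is coercive and of order `p - 1` in `Du`, the function `u` exceeds its lower bound `M` at
the centre by at most `δ` in the ball, and, where `u` is close to or above `M`, the right-hand side
`f` is at least `m` up to a drift `B|Du|^α` which is small at the scales `δ` and `R`. -/
structure SmallDriftOnBall (μ : Measure E) (V : E → E) (f u : E → ℝ) (z : E)
    (R δ M θ m B p α C₁ C₂ : ℝ) : Prop where
  contDiff : ContDiff ℝ 1 u
  coercive : ∀ x ∈ ball z R, C₁ * ‖fderiv ℝ u x‖ ^ p ≤ fderiv ℝ u x (V x)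
  norm_le : ∀ x ∈ ball z R, ‖V x‖ ≤ C₂ * ‖fderiv ℝ u x‖ ^ (p - 1)
  radius_pos : 0 < R
  osc_pos : 0 < δ
  le_add : ∀ x ∈ closedBall z R, u x ≤ M + δ
  le_center : M ≤ u z
  drift_nonneg : 0 ≤ B
  drift_small : δ ^ (α - p + 1) * R ^ (p - α) * B ≤ C₁ / 4
  le_rhs : ∀ᵐ x ∂μ, x ∈ ball z R → M - θ * δ < u x → m - B * ‖fderiv ℝ u x‖ ^ α ≤ f x

namespace SmallDriftOnBall

variable {μ : Measure E} {V : E → E} {f u : E → ℝ} {z : E} {R δ M θ m B p α C₁ C₂ : ℝ}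

lemma mul_drift_le (h : SmallDriftOnBall μ V f u z R δ M θ m B p α C₁ C₂) :
    δ * B ≤ C₁ / 4 * (δ / R) ^ (p - α) := by
  have hδ := h.osc_pos
  have hR := h.radius_pos
  have hδp : δ ^ (α - p + 1) = δ / δ ^ (p - α) := by
    rw [show α - p + 1 = 1 - (p - α) by ring, Real.rpow_sub hδ, Real.rpow_one]
  have hsmall := h.drift_small
  rw [hδp] at hsmall
  rw [Real.div_rpow hδ.le hR.le, mul_div_assoc', le_div_iff₀ (by positivity)]
  have hmul := mul_le_mul_of_nonneg_right hsmall (Real.rpow_nonneg hδ.le (p - α))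
  refine le_trans (le_of_eq ?_) hmul
  field_simp

lemma superlevelCoercive (h : SmallDriftOnBall μ V f u z R δ M θ m B p α C₁ C₂) (hp : 1 ≤ p)
    (hα : 0 ≤ α) (hαp : α ≤ p) (hC₁ : 0 < C₁) (hC₂ : 0 ≤ C₂) (hθ : θ < 1) :
    SuperlevelCoercive μ V f (fun x => u x - 2 * δ / R ^ 2 * ‖x - z‖ ^ 2) (ball z R) univ
      (M - θ * δ) (2 * δ) m (C₁ * (δ / R) ^ (p - 1)) (coercivityConst p C₁ C₂ * (δ / R) ^ p) where
  contDiff := h.contDiff.sub (contDiff_const.mul ((contDiff_id.sub contDiff_const).norm_sq ℝ))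
  isOpen := isOpen_ball
  isBounded := isBounded_ball
  lt_of_mem_frontier x hx := by
    have hR := h.radius_pos
    have hxz : ‖x - z‖ = R := mem_sphere_iff_norm.1 (frontier_ball_subset_sphere hx)
    have hu := h.le_add x (sphere_subset_closedBall (frontier_ball_subset_sphere hx))
    have hδ := mul_lt_mul_of_pos_right hθ h.osc_pos
    rw [hxz, div_mul_cancel₀ _ (by positivity)]
    linarith
  le_add x hx := by
    have hδ := mul_lt_mul_of_pos_right hθ h.osc_pos
    have hu := h.le_add x (ball_subset_closedBall hx)
    have hpar : 0 ≤ 2 * δ / R ^ 2 * ‖x - z‖ ^ 2 := by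
      have := h.osc_pos
      positivity
    linarith
  measurableSet := MeasurableSet.univ
  coercive := by
    have hδ := h.osc_pos
    have hR := h.radius_pos
    filter_upwards [h.le_rhs] with x hf hx hvx w hw
    have hux : M - θ * δ < u x := hvx.trans_le (sub_le_self _ (by positivity))
    rw [fderiv_sub_mul_norm_sub_sq (h.contDiff.differentiable one_ne_zero x),
      indicator_of_mem (mem_univ x)]
    exact drift_le_coercive_sub_add hp hα hαp hC₁ hC₂ h.drift_nonneg (by positivity)
      (h.coercive x hx) (h.norm_le x hx) (norm_smul_innerSL_sub_le hR hδ.le hx) h.mul_drift_le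
      (hf hx hux) hw

end SmallDriftOnBall

variable [BorelSpace E] [FiniteDimensional ℝ E] (μ : Measure E) [μ.IsAddHaarMeasure]

/-- The `n`-th power of this constant is a lower bound for the measure of a superlevel set in a
ball of radius `1` in the situation of `SmallDriftOnBall`. -/
def densityConst (p C₁ C₂ θ : ℝ) : ℝ :=
  θ ^ 2 * (1 / 4) ^ finrank ℝ E * C₁ / (64 * superlevelSobolevConst μ * coercivityConst p C₁ C₂)

/-- The constant of the growth lemma. -/
def growthConst (p C₁ C₂ θ : ℝ) : ℝ :=
  θ ^ 2 * densityConst μ p C₁ C₂ θ ^ finrank ℝ E /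
    (8 * coercivityConst p C₁ C₂ * μ.real (ball 0 1))

variable {p C₁ C₂ θ : ℝ}

lemma densityConst_pos (hC₁ : 0 < C₁) (hC₂ : 0 ≤ C₂) (hθ : 0 < θ) :
    0 < densityConst μ p C₁ C₂ θ := by
  have := superlevelSobolevConst_pos μ
  have := coercivityConst_pos (p := p) hC₁ hC₂
  unfold densityConst
  positivity

lemma growthConst_pos (hC₁ : 0 < C₁) (hC₂ : 0 ≤ C₂) (hθ : 0 < θ) :
    0 < growthConst μ p C₁ C₂ θ := by
  have := densityConst_pos μ (p := p) hC₁ hC₂ hθ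
  have := coercivityConst_pos (p := p) hC₁ hC₂
  have := measureReal_ball_pos μ (0 : E) one_pos
  unfold growthConst
  positivity

namespace SmallDriftOnBall

variable {μ} {V : E → E} {f u : E → ℝ} {z : E} {R δ M m B α : ℝ}

lemma lt_measureReal_superlevel (h : SmallDriftOnBall μ V f u z R δ M θ m B p α C₁ C₂)
    (hV : WeakDivGE μ V f) (hn : 2 ≤ finrank ℝ E) (hp : 1 ≤ p) (hα : 0 ≤ α) (hαp : α ≤ p)
    (hC₁ : 0 < C₁) (hC₂ : 0 ≤ C₂) (hθ₀ : 0 < θ) (hθ : θ < 1) (hm : 0 ≤ m) :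
    (densityConst μ p C₁ C₂ θ * R) ^ finrank ℝ E <
      μ.real (ball z R ∩ {x | M - θ * δ / 2 < u x - 2 * δ / R ^ 2 * ‖x - z‖ ^ 2}) := by
  have hδ := h.osc_pos
  have hR := h.radius_pos
  have hK := coercivityConst_pos (p := p) hC₁ hC₂
  have hCs := superlevelSobolevConst_pos μ
  have hθδ : 0 < θ * δ := mul_pos hθ₀ hδ
  have hz : M - θ * δ / 2 + θ * δ / 4 < u z - 2 * δ / R ^ 2 * ‖z - z‖ ^ 2 := by
    rw [sub_self, norm_zero, zero_pow two_ne_zero, mul_zero, sub_zero]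
    linarith [h.le_center]
  have hlt := (h.superlevelCoercive hp hα hαp hC₁ hC₂ hθ).lt_measureReal_of_add_lt hV hn hm
    (by positivity) (by positivity) (by positivity) (by linarith) (by positivity)
    (mem_ball_self hR) hz
  rw [inter_univ] at hlt
  refine (le_of_eq ?_).trans_lt hlt
  have hlam : (δ / R) ^ p ≠ 0 := by positivity
  rw [Real.rpow_sub_one (by positivity), densityConst]
  congr 1
  field_simp
  norm_num

lemma mul_sq_mul_densityConst_pow_le (h : SmallDriftOnBall μ V f u z R δ M θ m B p α C₁ C₂)
    (hV : WeakDivGE μ V f) (hn : 2 ≤ finrank ℝ E) (hp : 1 ≤ p) (hα : 0 ≤ α) (hαp : α ≤ p)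
    (hC₁ : 0 < C₁) (hC₂ : 0 ≤ C₂) (hθ₀ : 0 < θ) (hθ : θ < 1) (hm : 0 ≤ m) :
    m * (θ * δ / 2) ^ 2 * (densityConst μ p C₁ C₂ θ * R) ^ finrank ℝ E ≤
      coercivityConst p C₁ C₂ * (δ / R) ^ p * (2 * δ) * μ.real (ball z R) := by
  have hδ := h.osc_pos
  have hR := h.radius_pos
  have hK := coercivityConst_pos (p := p) hC₁ hC₂
  have hcheb := (h.superlevelCoercive hp hα hαp hC₁ hC₂ hθ).mul_sq_mul_measureReal_le hV hm
    (by positivity) (by positivity) le_rfl (l := M - θ * δ / 2) (by nlinarith)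
  rw [inter_univ, show M - θ * δ / 2 - (M - θ * δ) = θ * δ / 2 by ring] at hcheb
  refine le_trans ?_ (hcheb.trans ?_)
  · gcongr
    exact (h.lt_measureReal_superlevel hV hn hp hα hαp hC₁ hC₂ hθ₀ hθ hm).le
  · gcongr
    · exact measure_ball_lt_top.ne
    · exact inter_subset_left

theorem growthConst_mul_le (h : SmallDriftOnBall μ V f u z R δ M θ m B p α C₁ C₂)
    (hV : WeakDivGE μ V f) (hn : 2 ≤ finrank ℝ E) (hp : 1 ≤ p) (hα : 0 ≤ α) (hαp : α ≤ p)
    (hC₁ : 0 < C₁) (hC₂ : 0 ≤ C₂) (hθ₀ : 0 < θ) (hθ : θ < 1) (hm : 0 ≤ m) :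
    growthConst μ p C₁ C₂ θ * R ^ p * m ≤ δ ^ (p - 1) := by
  have hδ := h.osc_pos
  have hR := h.radius_pos
  have hK := coercivityConst_pos (p := p) hC₁ hC₂
  have hω := measureReal_ball_pos μ (0 : E) one_pos
  have hball : μ.real (ball z R) = R ^ finrank ℝ E * μ.real (ball 0 1) := by
    rw [measureReal_def, Measure.addHaar_ball_of_pos _ _ hR, ENNReal.toReal_mul,
      ENNReal.toReal_ofReal (by positivity), measureReal_def]
  have hle := h.mul_sq_mul_densityConst_pow_le hV hn hp hα hαp hC₁ hC₂ hθ₀ hθ hm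
  rw [growthConst, div_mul_eq_mul_div, div_mul_eq_mul_div, div_le_iff₀ (by positivity)]
  have hscale : 0 < δ ^ 2 * R ^ finrank ℝ E / (4 * R ^ p) := by positivity
  refine le_of_mul_le_mul_left ?_ hscale
  refine le_trans (le_of_eq ?_) (hle.trans (le_of_eq ?_))
  · rw [mul_pow (densityConst μ p C₁ C₂ θ)]
    field_simp
    ring
  · rw [hball, Real.div_rpow hδ.le hR.le, Real.rpow_sub_one hδ.ne']
    field_simp
    norm_num

end SmallDriftOnBall

end Growth

section EuclideanSpace

variable {n : ℕ} {p C₁ C₂ α β : ℝ} {A : Euc n → Euc n → Euc n} {a b q u : Euc n → ℝ} {g : ℝ → ℝ}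
  {r r₁ r₂ : ℝ}

lemma norm_gradient (u : Euc n → ℝ) (x : Euc n) : ‖gradient u x‖ = ‖fderiv ℝ u x‖ :=
  LinearIsometryEquiv.norm_map _ _

namespace StructCond

lemma coercive_fderiv (hA : StructCond A p C₁ C₂) (u : Euc n → ℝ) (x : Euc n) :
    C₁ * ‖fderiv ℝ u x‖ ^ p ≤ fderiv ℝ u x (A x (gradient u x)) := by
  rw [← norm_gradient, ← inner_gradient_left]
  exact (hA.2 x _).1

lemma norm_le_fderiv (hA : StructCond A p C₁ C₂) (u : Euc n → ℝ) (x : Euc n) :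
    ‖A x (gradient u x)‖ ≤ C₂ * ‖fderiv ℝ u x‖ ^ (p - 1) := by
  rw [← norm_gradient]
  exact (hA.2 x _).2

lemma locallyIntegrable_flux (hA : StructCond A p C₁ C₂) (hp : 1 ≤ p) (hu : ContDiff ℝ 1 u) :
    LocallyIntegrable (fun x => A x (gradient u x)) := by
  have hDu : Continuous (fderiv ℝ u) := hu.continuous_fderiv one_ne_zero
  have hgrad : Continuous (gradient u) := (LinearIsometryEquiv.continuous _).comp hDu
  have hbound : Continuous fun x => C₂ * ‖fderiv ℝ u x‖ ^ (p - 1) :=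
    continuous_const.mul (hDu.norm.rpow_const fun _ => .inr (sub_nonneg.2 hp))
  exact hbound.locallyIntegrable.mono
    (hA.1.comp (measurable_id.prodMk hgrad.measurable)).aestronglyMeasurable
    (ae_of_all _ fun x => (hA.norm_le_fderiv u x).trans (Real.le_norm_self _))

end StructCond

namespace LocBdd

lemma locallyIntegrable (hb : LocBdd b) (hmeas : Measurable b) (hb₀ : ∀ x, 0 ≤ b x) :
    LocallyIntegrable b := by
  refine locallyIntegrable_iff.2 fun K hK => ?_
  obtain ⟨C, hC⟩ := hb K hK
  refine Measure.integrableOn_of_bounded (M := C) hK.measure_lt_top.ne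
    hmeas.aestronglyMeasurable (ae_restrict_of_forall_mem hK.measurableSet fun x hx => ?_)
  rw [Real.norm_of_nonneg (hb₀ x)]
  exact hC x hx

lemma exists_drift_le (hb : LocBdd b) (hb₀ : ∀ x, 0 ≤ b x) (hp : 1 ≤ p) (hα : p - 1 ≤ α)
    (hu : ContDiff ℝ 1 u) {K : Set (Euc n)} (hK : IsCompact K) :
    ∃ B, 0 ≤ B ∧ ∀ x ∈ K, b x * ‖fderiv ℝ u x‖ ^ α ≤ B * ‖fderiv ℝ u x‖ ^ (p - 1) := by
  obtain ⟨C, hC⟩ := hb K hK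
  obtain ⟨D, hD⟩ := hK.exists_bound_of_continuousOn
    (hu.continuous_fderiv one_ne_zero).continuousOn
  refine ⟨max C 0 * max D 0 ^ (α - (p - 1)), by positivity, fun x hx => ?_⟩
  have hpow : ‖fderiv ℝ u x‖ ^ α =
      ‖fderiv ℝ u x‖ ^ (α - (p - 1)) * ‖fderiv ℝ u x‖ ^ (p - 1) := by
    rw [← Real.rpow_add_of_nonneg (norm_nonneg _) (sub_nonneg.2 hα) (sub_nonneg.2 hp),
      sub_add_cancel]
  rw [hpow, ← mul_assoc]
  have hbx := (hC x hx).trans (le_max_left C 0)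
  have hDx := (hD x hx).trans (le_max_left D 0)
  have := hb₀ x
  have := sub_nonneg.2 hα
  gcongr

end LocBdd

lemma measurableSet_Ann : MeasurableSet (Ann n r₁ r₂) :=
  ((isOpen_lt continuous_const continuous_norm).inter
    (isOpen_lt continuous_norm continuous_const)).measurableSet

lemma ball_subset_Ann {z : Euc n} (hz : ‖z‖ = (r₁ + r₂) / 2) :
    ball z ((r₂ - r₁) / 2) ⊆ Ann n r₁ r₂ := fun x hx => by
  have hxz := mem_ball_iff_norm.1 hx
  have hupper := norm_le_norm_add_norm_sub' x z
  have hlower := norm_le_norm_add_norm_sub' z x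
  rw [norm_sub_rev] at hlower
  exact ⟨by linarith, by linarith⟩

lemma norm_le_outer_radius_of_mem_closedBall {z x : Euc n} (hz : ‖z‖ = (r₁ + r₂) / 2)
    (hx : x ∈ closedBall z ((r₂ - r₁) / 2)) : ‖x‖ ≤ r₂ := by
  linarith [mem_closedBall_iff_norm.1 hx, norm_le_norm_add_norm_sub' x z]

lemma LocBdd.ae_le_essSup_Ann (hb : LocBdd b) (r₁ r₂ : ℝ) :
    ∀ᵐ x, x ∈ Ann n r₁ r₂ → b x ≤ essSup b (volume.restrict (Ann n r₁ r₂)) := by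
  obtain ⟨C, hC⟩ := hb _ (isCompact_closedBall 0 r₂)
  exact (ae_restrict_iff' measurableSet_Ann).1 <| ae_le_essSup
    ⟨C, ae_restrict_of_forall_mem measurableSet_Ann fun x hx =>
      hC x (mem_closedBall_zero_iff.2 hx.2.le)⟩

lemma ae_essInf_Ann_le (hq₀ : ∀ x, 0 ≤ q x) (r₁ r₂ : ℝ) :
    ∀ᵐ x, x ∈ Ann n r₁ r₂ → essInf q (volume.restrict (Ann n r₁ r₂)) ≤ q x :=
  (ae_restrict_iff' measurableSet_Ann).1 (ae_essInf_le ⟨0, ae_of_all _ hq₀⟩)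

lemma essInf_nonneg {X : Type*} [MeasurableSpace X] {μ : Measure X} {f : X → ℝ}
    (hf : ∀ x, 0 ≤ f x) : 0 ≤ essInf f μ :=
  Real.sSup_nonneg' ⟨0, ae_of_all _ hf, le_rfl⟩

lemma essSup_nonneg {X : Type*} [MeasurableSpace X] {μ : Measure X} {f : X → ℝ}
    (hf : ∀ x, 0 ≤ f x) : 0 ≤ essSup f μ := by
  rcases eq_zero_or_neZero μ with rfl | _
  · simp [essSup, limsup, limsSup]
  · refine Real.sInf_nonneg fun c (hc : ∀ᵐ x ∂μ, f x ≤ c) => ?_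
    obtain ⟨x, hx⟩ := hc.exists
    exact (hf x).trans hx

lemma csInf_image_Ioo_le {a b t : ℝ} (hg : ContinuousOn g (Ioc a b))
    (hbdd : BddBelow (g '' Ioo a b)) (ht : t ∈ Ioc a b) : sInf (g '' Ioo a b) ≤ g t := by
  have htcl : t ∈ closure (Ioo a b) := by
    rw [closure_Ioo (ht.1.trans_le ht.2).ne]
    exact Ioc_subset_Icc_self ht
  exact closure_minimal (fun _ => csInf_le hbdd) isClosed_Ici
    (((hg t ht).mono Ioo_subset_Ioc_self).mem_closure_image htcl)

lemma sphMax_nonneg (hu₀ : ∀ x, 0 ≤ u x) (r : ℝ) : 0 ≤ sphMax u r :=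
  Real.sSup_nonneg (forall_mem_image.2 fun x _ => hu₀ x)

lemma le_sphMax (hu : Continuous u) (x : Euc n) : u x ≤ sphMax u ‖x‖ :=
  le_csSup ((isCompact_sphere 0 ‖x‖).image hu).bddAbove
    (mem_image_of_mem u (mem_sphere_zero_iff_norm.2 rfl))

lemma exists_norm_eq_and_eq_sphMax (hn : 0 < n) (hu : Continuous u) (hr : 0 ≤ r) :
    ∃ x, ‖x‖ = r ∧ u x = sphMax u r := by
  have : Nontrivial (Euc n) := Module.nontrivial_of_finrank_pos (R := ℝ) (by simpa using hn)
  obtain ⟨x, hx, hmax⟩ := (isCompact_sphere (0 : Euc n) r).exists_sSup_image_eq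
    (NormedSpace.sphere_nonempty.2 hr) hu.continuousOn
  exact ⟨x, mem_sphere_zero_iff_norm.1 hx, hmax.symm⟩

namespace IsWeakSol

lemma weakDivGE (hw : IsWeakSol A b α a univ u) (hA : StructCond A p C₁ C₂)
    (hp : 1 ≤ p) (hα : 0 ≤ α) (hu : ContDiff ℝ 1 u) (ha : LocallyIntegrable a)
    (hb : LocallyIntegrable b) :
    WeakDivGE volume (fun x => A x (gradient u x))
      (fun x => a x - b x * ‖fderiv ℝ u x‖ ^ α) := by
  have hDu : Continuous fun x => ‖fderiv ℝ u x‖ ^ α :=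
    (hu.continuous_fderiv one_ne_zero).norm.rpow_const fun _ => .inr hα
  have hV := hA.locallyIntegrable_flux hp hu
  have hdrift : LocallyIntegrable fun x => b x * ‖fderiv ℝ u x‖ ^ α :=
    locallyIntegrableOn_univ.1 <|
      (locallyIntegrableOn_univ.2 hb).mul_continuousOn hDu.continuousOn isOpen_univ.isLocallyClosed
  refine ⟨hV, ha.sub hdrift, fun φ hφ hc hφ₀ => ?_⟩
  have haφ := ha.integrable_smul_right_of_hasCompactSupport hφ.continuous hc
  have hbφ := hdrift.integrable_smul_right_of_hasCompactSupport hφ.continuous hc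
  have hVφ : Integrable fun x => fderiv ℝ φ x (A x (gradient u x)) := by
    simpa using integrable_mul_add_fderiv_apply hV (locallyIntegrable_zero (ε'' := ℝ))
      (hφ.of_le (mod_cast le_top)) hc
  have hle := hw φ hφ hc (subset_univ _) hφ₀
  simp only [setIntegral_univ, norm_gradient, inner_gradient_right, RCLike.conj_to_real] at hle
  simp only [smul_eq_mul] at haφ hbφ
  have hsub := integral_sub haφ hbφ
  have hadd := integral_add (haφ.sub hbφ) hVφ
  simp only [Pi.sub_apply] at hadd
  simp only [sub_mul]
  linarith

lemma le_sphMax_of_norm_le (hw : IsWeakSol A b α a univ u) (hA : StructCond A p C₁ C₂) (hn : 2 ≤ n)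
    (hp : 1 < p) (hC₁ : 0 < C₁) (hα : p - 1 ≤ α) (hu : ContDiff ℝ 1 u) (ha : LocallyIntegrable a)
    (ha₀ : ∀ x, 0 ≤ a x) (hb : Measurable b) (hb₀ : ∀ x, 0 ≤ b x) (hbl : LocBdd b) {x : Euc n}
    (hx : ‖x‖ ≤ r) : u x ≤ sphMax u r := by
  rcases hx.eq_or_lt with rfl | hxr
  · exact le_sphMax hu.continuous x
  obtain ⟨B, hB, hdrift⟩ := hbl.exists_drift_le hb₀ hp.le hα hu (isCompact_closedBall 0 r)
  refine (hw.weakDivGE hA hp.le (by linarith) hu ha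
    (hbl.locallyIntegrable hb hb₀)).le_of_forall_frontier_le (by simpa using hn) hp hC₁ hB
    isOpen_ball isBounded_ball hu (fun y _ => hA.coercive_fderiv u y) (fun y hy => ?_)
    (fun y hy => ?_) (mem_ball_zero_iff.2 hxr)
  · linarith [ha₀ y, hdrift y (ball_subset_closedBall hy)]
  · rw [← mem_sphere_zero_iff_norm.1 (frontier_ball_subset_sphere hy)]
    exact le_sphMax hu.continuous y

lemma monotoneOn_sphMax (hw : IsWeakSol A b α a univ u) (hA : StructCond A p C₁ C₂) (hn : 2 ≤ n)
    (hp : 1 < p) (hC₁ : 0 < C₁) (hα : p - 1 ≤ α) (hu : ContDiff ℝ 1 u) (ha : LocallyIntegrable a)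
    (ha₀ : ∀ x, 0 ≤ a x) (hb : Measurable b) (hb₀ : ∀ x, 0 ≤ b x) (hbl : LocBdd b) :
    MonotoneOn (sphMax u) (Ici 0) := by
  rintro r hr s - hrs
  obtain ⟨x, rfl, hx⟩ := exists_norm_eq_and_eq_sphMax (by omega) hu.continuous hr
  exact hx ▸ hw.le_sphMax_of_norm_le hA hn hp hC₁ hα hu ha ha₀ hb hb₀ hbl hrs

end IsWeakSol

lemma locallyIntegrable_mul_comp (hq : LocallyIntegrable q) (hg : ContinuousOn g (Ici 0))
    (hu : Continuous u) (hu₀ : ∀ x, 0 ≤ u x) : LocallyIntegrable fun x => q x * g (u x) :=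
  locallyIntegrableOn_univ.1 <| (locallyIntegrableOn_univ.2 hq).mul_continuousOn
    (hg.comp_continuous hu hu₀).continuousOn isOpen_univ.isLocallyClosed

lemma StructCond.smallDriftOnBall (hA : StructCond A p C₁ C₂) (hα : α ≤ p)
    (hb₀ : ∀ x, 0 ≤ b x) (hbl : LocBdd b) (hq₀ : ∀ x, 0 ≤ q x)
    (hg : ContinuousOn g (Ici 0)) (hg₀ : ∀ t ∈ Ici (0 : ℝ), 0 ≤ g t)
    (hu : ContDiff ℝ 1 u) (hmono : MonotoneOn (sphMax u) (Ici 0)) (hr₁ : 0 ≤ r₁) (hr : r₁ < r₂)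
    (hM₁ : 0 ≤ sphMax u r₁) (hM : sphMax u r₁ < sphMax u r₂) (hβ : 0 ≤ β)
    (hβM : β * sphMax u r₂ ≤ sphMax u r₁)
    (hsmall : (sphMax u r₂ - sphMax u r₁) ^ (α - p + 1) * (r₂ - r₁) ^ (p - α) *
      essSup b (volume.restrict (Ann n r₁ r₂)) ≤ C₁ / 4)
    {z : Euc n} (hz : ‖z‖ = (r₁ + r₂) / 2) (hzM : u z = sphMax u ((r₁ + r₂) / 2)) :
    SmallDriftOnBall volume (fun x => A x (gradient u x))
      (fun x => q x * g (u x) - b x * ‖fderiv ℝ u x‖ ^ α) u z ((r₂ - r₁) / 2)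
      (sphMax u r₂ - sphMax u r₁) (sphMax u r₁) β
      (essInf q (volume.restrict (Ann n r₁ r₂)) * sInf (g '' Ioo (β * sphMax u r₁) (sphMax u r₂)))
      (essSup b (volume.restrict (Ann n r₁ r₂))) p α C₁ C₂ where
  contDiff := hu
  coercive x _ := hA.coercive_fderiv u x
  norm_le x _ := hA.norm_le_fderiv u x
  radius_pos := by linarith
  osc_pos := sub_pos.2 hM
  le_add x hx := by
    have hxr := norm_le_outer_radius_of_mem_closedBall hz hx
    rw [add_sub_cancel]
    exact (le_sphMax hu.continuous x).trans
      (hmono (norm_nonneg x) (mem_Ici.2 (hr₁.trans hr.le)) hxr)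
  le_center := hzM ▸ hmono hr₁ (mem_Ici.2 (by linarith)) (by linarith)
  drift_nonneg := essSup_nonneg hb₀
  drift_small := by
    have := sub_pos.2 hM
    have hB := essSup_nonneg (μ := volume.restrict (Ann n r₁ r₂)) hb₀
    refine le_trans ?_ hsmall
    gcongr
    · linarith
  le_rhs := by
    have hIoo : ∀ t ∈ Ioo (β * sphMax u r₁) (sphMax u r₂), 0 ≤ g t := fun t ht =>
      hg₀ t ((mul_nonneg hβ hM₁).trans ht.1.le)
    have hInf : 0 ≤ sInf (g '' Ioo (β * sphMax u r₁) (sphMax u r₂)) :=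
      Real.sInf_nonneg (forall_mem_image.2 hIoo)
    filter_upwards [hbl.ae_le_essSup_Ann r₁ r₂, ae_essInf_Ann_le hq₀ r₁ r₂] with x hbx hqx hx hux
    have hxAnn := ball_subset_Ann hz hx
    have hgx : sInf (g '' Ioo (β * sphMax u r₁) (sphMax u r₂)) ≤ g (u x) := by
      refine csInf_image_Ioo_le (hg.mono fun t ht => (mul_nonneg hβ hM₁).trans ht.1.le)
        ⟨0, forall_mem_image.2 hIoo⟩ ⟨by linarith, ?_⟩
      exact (le_sphMax hu.continuous x).trans
        (hmono (norm_nonneg x) (mem_Ici.2 (hr₁.trans hr.le)) hxAnn.2.le)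
    gcongr
    · exact hq₀ x
    · exact hqx hxAnn
    · exact hbx hxAnn

end EuclideanSpace

/-- Lemma 3.1: bound from below for the growth of `M(r;u)` when the `b`-term is small. -/
theorem stmt_4 (n : ℕ) (hn : 2 ≤ n) (p C₁ C₂ α : ℝ) (hp : 1 < p)
    (hC₁ : 0 < C₁) (hC₂ : 0 < C₂) (hα₁ : p - 1 ≤ α) (hα₂ : α ≤ p)
    (β : ℝ) (hβ0 : 0 < β) (hβ1 : β < 1) :
    ∃ C : ℝ, 0 < C ∧
      ∀ (A : Euc n → Euc n → Euc n), StructCond A p C₁ C₂ →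
      ∀ (b : Euc n → ℝ), Measurable b → (∀ x, 0 ≤ b x) → LocBdd b →
      ∀ (q : Euc n → ℝ), Measurable q → (∀ x, 0 ≤ q x) → LocBdd q →
      ∀ (g : ℝ → ℝ), ContinuousOn g (Set.Ici 0) → (∀ t ∈ Set.Ici (0 : ℝ), 0 ≤ g t) →
        (∀ t : ℝ, 0 < t → 0 < g t) →
      ∀ u : Euc n → ℝ, ContDiff ℝ 1 u → (∀ x, 0 ≤ u x) →
        IsWeakSol A b α (fun x => q x * g (u x)) Set.univ u →
      ∀ r₁ r₂ : ℝ, 0 < r₁ → r₁ < r₂ →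
        sphMax u r₁ < sphMax u r₂ → β * sphMax u r₂ ≤ sphMax u r₁ →
        (sphMax u r₂ - sphMax u r₁) ^ (α - p + 1) * (r₂ - r₁) ^ (p - α) *
            essSup b (volume.restrict (Ann n r₁ r₂)) ≤ C₁ / 4 →
        C * (r₂ - r₁) ^ p * essInf q (volume.restrict (Ann n r₁ r₂)) *
            sInf (g '' Set.Ioo (β * sphMax u r₁) (sphMax u r₂)) ≤
          (sphMax u r₂ - sphMax u r₁) ^ (p - 1) := by
  refine ⟨growthConst (volume : Measure (Euc n)) p C₁ C₂ β / 2 ^ p,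
    div_pos (growthConst_pos _ hC₁ hC₂.le hβ0) (by positivity), ?_⟩
  intro A hA b hb hb₀ hbl q hq hq₀ hql g hg hg₀ _ u hu hu₀ hw r₁ r₂ hr₁ hr hM hβM hsmall
  have hqg : LocallyIntegrable fun x => q x * g (u x) :=
    locallyIntegrable_mul_comp (hql.locallyIntegrable hq hq₀) hg hu.continuous hu₀
  have hqg₀ : ∀ x, 0 ≤ q x * g (u x) := fun x => mul_nonneg (hq₀ x) (hg₀ _ (hu₀ x))
  have hmono : MonotoneOn (sphMax u) (Ici 0) :=
    hw.monotoneOn_sphMax hA hn hp hC₁ hα₁ hu hqg hqg₀ hb hb₀ hbl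
  have hV := hw.weakDivGE hA hp.le (by linarith) hu hqg (hbl.locallyIntegrable hb hb₀)
  obtain ⟨z, hz, hzM⟩ := exists_norm_eq_and_eq_sphMax (by omega) hu.continuous
    (show 0 ≤ (r₁ + r₂) / 2 by linarith)
  have hball := hA.smallDriftOnBall hα₂ hb₀ hbl hq₀ hg hg₀ hu hmono hr₁.le hr
    (sphMax_nonneg hu₀ r₁) hM hβ0.le hβM hsmall hz hzM
  have hm : 0 ≤ essInf q (volume.restrict (Ann n r₁ r₂)) *
      sInf (g '' Ioo (β * sphMax u r₁) (sphMax u r₂)) :=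
    mul_nonneg (essInf_nonneg hq₀) <| Real.sInf_nonneg <| forall_mem_image.2 fun t ht =>
      hg₀ t ((mul_nonneg hβ0.le (sphMax_nonneg hu₀ r₁)).trans ht.1.le)
  refine (le_of_eq ?_).trans (hball.growthConst_mul_le hV (by simpa using hn) hp.le (by linarith)
    hα₂ hC₁ hC₂.le hβ0 hβ1 hm)
  rw [Real.div_rpow (sub_nonneg.2 hr.le) zero_le_two]
  ring
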